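/- Let B be a type of base objects, V : B → Type an assignment of value types, and R a type of responses. Let m be a natural number, and for each i ∈ Fin m let g i : ((b : B) → V b) → R be a function depending only on the coordinates in a finite set A i ⊆ B (i.e., g i C = g i C' whenever C and C' agree on every b ∈ A i). Suppose that for each i ∈ Fin m there exist a configuration D i and, for each ℓ ∈ Fin i, pairwise disjoint sets S i ℓ ⊆ B and configurations C i ℓ agreeing with D i outside S i ℓ, such that g i (C i ℓ) ≠ g i (D i) for every ℓ ∈ Fin i. Then the total number of base-object accesses satisfies ∑_{i ∈ Fin m} (A i).card ≥ m·(m−1)/2. -/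

import Mathlib

/-!
A function that depends only on the coordinates in `A` can notice a change of configuration only
if the change touches `A`. Hence, if `n` changes supported on pairwise disjoint sets are all
noticed, then `A` meets each of these sets, in distinct points, so that `n ≤ A.card`
(`le_card_of_distinguishes`). The `i`-th function (counted from `0`) distinguishes `i`
configurations, and summing gives `0 + 1 + ⋯ + (m - 1) = m * (m - 1) / 2`.
-/

/-- A function depending only on the coordinates in `A` that distinguishes `D` from each of `n`
configurations, which differ from `D` on pairwise disjoint sets, must have `n ≤ A.card`. -/
theorem le_card_of_distinguishes {B : Type*} {V : B → Type*} {R : Type*} {n : ℕ}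
    (g : ((b : B) → V b) → R) (A : Finset B)
    (hdep : ∀ C C' : (b : B) → V b, (∀ b ∈ A, C b = C' b) → g C = g C')
    (D : (b : B) → V b) (S : Fin n → Set B)
    (hdisj : ∀ k l : Fin n, k ≠ l → Disjoint (S k) (S l))
    (C : Fin n → (b : B) → V b)
    (hagree : ∀ l : Fin n, ∀ b ∉ S l, C l b = D b)
    (hne : ∀ l : Fin n, g (C l) ≠ g D) : n ≤ A.card := by
  have hmeet : ∀ l : Fin n, ∃ b ∈ A, b ∈ S l := by
    intro l
    by_contra! h
    exact hne l (hdep _ _ fun b hb => hagree l b (h b hb))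
  choose f hfA hfS using hmeet
  have hinj : Function.Injective f := by
    intro k l hkl
    by_contra h
    exact Set.disjoint_left.mp (hdisj k l h) (hfS k) (hkl ▸ hfS l)
  simpa using Finset.card_le_card_of_injOn (s := Finset.univ) (t := A) f
    (fun l _ => hfA l) hinj.injOn

theorem quadratic_step_complexity_lower_bound
    {B : Type*} {V : B → Type*} {R : Type*}
    (m : ℕ)
    (g : Fin m → ((b : B) → V b) → R)
    (A : Fin m → Finset B)
    (hdep : ∀ i : Fin m, ∀ C C' : (b : B) → V b,
      (∀ b ∈ A i, C b = C' b) → g i C = g i C')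
    (D : Fin m → (b : B) → V b)
    (S : (i : Fin m) → Fin i → Set B)
    (hdisj : ∀ i : Fin m, ∀ ℓ ℓ' : Fin i, ℓ ≠ ℓ' → Disjoint (S i ℓ) (S i ℓ'))
    (C : (i : Fin m) → Fin i → (b : B) → V b)
    (hagree : ∀ i : Fin m, ∀ ℓ : Fin i, ∀ b ∉ S i ℓ, C i ℓ b = D i b)
    (hne : ∀ i : Fin m, ∀ ℓ : Fin i, g i (C i ℓ) ≠ g i (D i)) :
    m * (m - 1) / 2 ≤ ∑ i : Fin m, (A i).card := by
  calc m * (m - 1) / 2 = ∑ i : Fin m, (i : ℕ) := by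
        rw [Fin.sum_univ_eq_sum_range (fun i => i) m, Finset.sum_range_id]
    _ ≤ ∑ i : Fin m, (A i).card := Finset.sum_le_sum fun i _ =>
        le_card_of_distinguishes (g i) (A i) (hdep i) (D i) (S i) (hdisj i) (C i) (hagree i) (hne i)
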